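/- Let k be a field and let t_1,…,t_r be nonnegative integers with t_1+⋯+t_r = m+1 and each t_i ≤ m+1. Set P = P(m;t_1,…,t_r). Then the images of g_0, g_1,…,g_m form a regular sequence on the localization R_P. -/

import Mathlib

/-- The polynomial ring `R = k[x_i^(j) : 1 ≤ i ≤ n, 0 ≤ j ≤ m]` in `n(m+1)` variables;
the variable `x_i^(j)` is `MvPolynomial.X (i, j)`. -/
abbrev JetRing (k : Type*) [Field k] (m n : ℕ) : Type _ :=
  MvPolynomial (Fin n × Fin (m + 1)) k

/-- `jetGen k m n r hrn j` is the generator `g_j`, i.e. the coefficient of `t^j` in the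
product `∏_{i=1}^{r} (x_i^(0) + x_i^(1) t + ⋯ + x_i^(m) t^m)`. -/
noncomputable def jetGen (k : Type*) [Field k] (m n r : ℕ) (hrn : r ≤ n) (j : ℕ) :
    JetRing k m n :=
  Polynomial.coeff
    (∏ i : Fin r, ∑ l : Fin (m + 1),
      Polynomial.C (MvPolynomial.X (Fin.castLE hrn i, l)) * Polynomial.X ^ (l : ℕ)) j

/-- The ideal `J_m = (g_0, …, g_m)` defining the `m`-th jet scheme of `x_1 ⋯ x_r = 0`. -/
noncomputable def jetIdeal (k : Type*) [Field k] (m n r : ℕ) (hrn : r ≤ n) :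
    Ideal (JetRing k m n) :=
  Ideal.span (jetGen k m n r hrn '' Set.Iic m)

/-- The ideal `P(m; t_1, …, t_r) = (x_i^(j) : 1 ≤ i ≤ r, 0 ≤ j ≤ t_i - 1)`. -/
noncomputable def compPrime (k : Type*) [Field k] (m n r : ℕ) (hrn : r ≤ n)
    (t : Fin r → ℕ) : Ideal (JetRing k m n) :=
  Ideal.span {p | ∃ (i : Fin r) (j : Fin (m + 1)), (j : ℕ) < t i ∧
    p = MvPolynomial.X (Fin.castLE hrn i, j)}

/-- The length of a module, valued in `ℕ∞`: the supremum of lengths of strictly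
increasing chains of submodules. -/
noncomputable def moduleLength (R M : Type*) [Ring R] [AddCommGroup M] [Module R M] : ℕ∞ :=
  Order.height (⊤ : Submodule R M)

/-!
For `s : Fin r → ℕ` write `|s| = ∑ i, s i` and `P(s) = (x_i^(j) : j < s_i)`. Modulo `P(s)` the
generators `g_j` with `j < |s|` vanish and `g_{|s|}` becomes `∏ i, x_i^(s_i)`, a product of
variables that are nonzerodivisors modulo `P(s)`; adding the `i`-th of them to `P(s)` gives
`P(s + e_i)`. If `a` is a nonzerodivisor on `M`, then `M ⧸ abM` is an extension of `M ⧸ aM` by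
`M ⧸ bM`, so the regularity of `g_{|s| + 1}, …, g_m` modulo `P(s) + (g_{|s|})` follows from its
regularity modulo every `P(s + e_i)`. Starting from `P(0) = 0`, this makes `g_0, …, g_m` weakly
regular on `R`, hence on every localization.
-/

open RingTheory.Sequence
open scoped Pointwise

section WeaklyRegular

variable {A M M₁ M₂ M₃ : Type*} [CommRing A] [AddCommGroup M] [Module A M]
  [AddCommGroup M₁] [Module A M₁] [AddCommGroup M₂] [Module A M₂] [AddCommGroup M₃] [Module A M₃]

theorem quotSMulTop_map_injective {a : A} {f : M₁ →ₗ[A] M₂} {g : M₂ →ₗ[A] M₃}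
    (hf : Function.Injective f) (hfg : Function.Exact f g) (ha : IsSMulRegular M₃ a) :
    Function.Injective (QuotSMulTop.map a f) := by
  have h := QuotSMulTop.map_first_exact_on_four_term_exact_of_isSMulRegular_last
    ((LinearMap.exact_zero_iff_injective M₁ f).2 hf) hfg ha
  rw [map_zero] at h
  exact (LinearMap.exact_zero_iff_injective _ _).1 h

theorem isWeaklyRegular_of_shortExact {f : M₁ →ₗ[A] M₂} {g : M₂ →ₗ[A] M₃} {l : List A}
    (hf : Function.Injective f) (hfg : Function.Exact f g) (hg : Function.Surjective g)
    (h₁ : IsWeaklyRegular M₁ l) (h₃ : IsWeaklyRegular M₃ l) : IsWeaklyRegular M₂ l := by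
  induction l generalizing M₁ M₂ M₃ with
  | nil => exact .nil A M₂
  | cons a l ih =>
    rw [isWeaklyRegular_cons_iff] at h₁ h₃ ⊢
    exact ⟨isSMulRegular_of_range_eq_ker hf hfg.linearMap_ker_eq.symm h₁.1 h₃.1,
      ih (quotSMulTop_map_injective hf hfg h₃.1) (QuotSMulTop.map_exact a hfg hg)
        (QuotSMulTop.map_surjective a hg) h₁.2 h₃.2⟩

theorem isWeaklyRegular_of_subsingleton [Subsingleton M] (l : List A) : IsWeaklyRegular M l := by
  rw [isWeaklyRegular_iff]
  intro i hi
  have := (Submodule.mkQ_surjective (Ideal.ofList (l.take i) • ⊤ : Submodule A M)).subsingleton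
  exact Function.injective_of_subsingleton _

theorem isWeaklyRegular_one_cons (l : List A) : IsWeaklyRegular M (1 :: l) := by
  have : Subsingleton (QuotSMulTop (1 : A) M) := by
    rw [QuotSMulTop, Submodule.Quotient.subsingleton_iff, one_smul]
  exact .cons (.one M) (isWeaklyRegular_of_subsingleton l)

theorem isWeaklyRegular_quotient_smul {a : A} {N : Submodule A M} {l : List A}
    (ha : IsSMulRegular M a) (hN : IsWeaklyRegular (M ⧸ N) l)
    (hla : IsWeaklyRegular (QuotSMulTop a M) l) : IsWeaklyRegular (M ⧸ a • N) l := by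
  let mulA : M →ₗ[A] M := DistribSMul.toLinearMap A M a
  have hinj : Function.Injective mulA := ha
  have hle : a • N ≤ a • ⊤ := smul_mono_right a le_top
  have hrange : LinearMap.range mulA = a • ⊤ := (Submodule.map_top mulA).symm
  refine isWeaklyRegular_of_shortExact
    (f := N.mapQ (a • N) mulA (Submodule.le_comap_map mulA N)) (g := Submodule.factor hle)
    ?_ ?_ (Submodule.factor_surjective hle) hN hla
  · rw [← LinearMap.ker_eq_bot, Submodule.ker_mapQ, Submodule.pointwise_smul_def,
      Submodule.comap_map_eq_of_injective hinj, Submodule.mkQ_map_self]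
  · rw [LinearMap.exact_iff, Submodule.factor, Submodule.ker_mapQ, Submodule.comap_id,
      Submodule.range_mapQ, hrange]

theorem isWeaklyRegular_mul_cons {a b : A} {l : List A} (ha : IsWeaklyRegular M (a :: l))
    (hb : IsWeaklyRegular M (b :: l)) : IsWeaklyRegular M (a * b :: l) := by
  rw [isWeaklyRegular_cons_iff] at ha hb ⊢
  have hab := isWeaklyRegular_quotient_smul ha.1 hb.2 ha.2
  rw [← mul_smul] at hab
  exact ⟨ha.1.mul hb.1, hab⟩

theorem isWeaklyRegular_prod_cons {ι : Type*} (s : Finset ι) (a : ι → A) {l : List A}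
    (h : ∀ i ∈ s, IsWeaklyRegular M (a i :: l)) : IsWeaklyRegular M ((∏ i ∈ s, a i) :: l) :=
  Finset.prod_induction a (fun c => IsWeaklyRegular M (c :: l))
    (fun _ _ => isWeaklyRegular_mul_cons) (isWeaklyRegular_one_cons l) h

theorem isWeaklyRegular_quotient_cons_iff (N : Submodule A M) (a : A) (l : List A) :
    IsWeaklyRegular (M ⧸ N) (a :: l) ↔
      IsSMulRegular (M ⧸ N) a ∧ IsWeaklyRegular (M ⧸ (N ⊔ a • ⊤)) l := by
  have h : (a • ⊤ : Submodule A (M ⧸ N)) = (a • ⊤ : Submodule A M).map N.mkQ := by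
    rw [Submodule.map_pointwise_smul, Submodule.map_top, Submodule.range_mkQ]
  rw [isWeaklyRegular_cons_iff, (Submodule.quotEquivOfEq _ _ h ≪≫ₗ
    Submodule.quotientQuotientEquivQuotientSup N (a • ⊤)).isWeaklyRegular_congr]

theorem isWeaklyRegular_cons_congr {I : Ideal A} {a b : A} (h : a - b ∈ I) (l : List A) :
    IsWeaklyRegular (M ⧸ (I • ⊤ : Submodule A M)) (a :: l) ↔
      IsWeaklyRegular (M ⧸ (I • ⊤ : Submodule A M)) (b :: l) := by
  have hsmul (x : M ⧸ (I • ⊤ : Submodule A M)) : a • x = b • x := by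
    obtain ⟨x, rfl⟩ := Submodule.mkQ_surjective _ x
    rw [← sub_eq_zero, ← sub_smul, ← map_smul, Submodule.mkQ_apply, Submodule.Quotient.mk_eq_zero]
    exact Submodule.smul_mem_smul h Submodule.mem_top
  exact (AddEquiv.refl _).isWeaklyRegular_congr
    (.cons hsmul (List.forall₂_same.2 fun _ _ _ => rfl))

end WeaklyRegular

section CoeffProd

variable {A M ι : Type*} [CommRing A] [AddCommGroup M] [Module A M]

/-- The ideal generated by the coefficients of `f i` of degree less than `s i`, for all `i`. For the
generic jets of `x_1, …, x_r` it is the ideal `P(m; s_1, …, s_r)`. -/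
def initialCoeffIdeal (f : ι → PowerSeries A) (s : ι → ℕ) : Ideal A :=
  Ideal.span {c | ∃ i, ∃ j < s i, c = PowerSeries.coeff j (f i)}

theorem coeff_mem_initialCoeffIdeal (f : ι → PowerSeries A) {s : ι → ℕ} {i : ι} {j : ℕ}
    (h : j < s i) : PowerSeries.coeff j (f i) ∈ initialCoeffIdeal f s :=
  Ideal.subset_span ⟨i, j, h, rfl⟩

theorem initialCoeffIdeal_zero (f : ι → PowerSeries A) : initialCoeffIdeal f 0 = ⊥ := by
  simp [initialCoeffIdeal]

theorem initialCoeffIdeal_add_single [DecidableEq ι] (f : ι → PowerSeries A) (s : ι → ℕ) (i : ι) :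
    initialCoeffIdeal f (s + Pi.single i 1) =
      initialCoeffIdeal f s ⊔ Ideal.span {PowerSeries.coeff (s i) (f i)} := by
  refine le_antisymm (Ideal.span_le.2 ?_) (sup_le (Ideal.span_mono ?_) ?_)
  · rintro _ ⟨i', j, hj, rfl⟩
    by_cases h : j < s i'
    · exact Ideal.mem_sup_left (coeff_mem_initialCoeffIdeal f h)
    · obtain rfl : i' = i := by
        by_contra hne
        exact h (by simpa [hne] using hj)
      obtain rfl : j = s i' := by
        simp only [Pi.add_apply, Pi.single_eq_same] at hj
        omega
      exact Ideal.mem_sup_right (Ideal.mem_span_singleton_self _)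
  · rintro _ ⟨i', j, hj, rfl⟩
    exact ⟨i', j, hj.trans_le (Nat.le_add_right _ _), rfl⟩
  · rw [Ideal.span_singleton_le_iff_mem]
    exact coeff_mem_initialCoeffIdeal f (by simp)

variable [Fintype ι]

theorem prod_coeff_mem_initialCoeffIdeal (f : ι → PowerSeries A) {s l : ι → ℕ} {i : ι}
    (h : l i < s i) : ∏ i, PowerSeries.coeff (l i) (f i) ∈ initialCoeffIdeal f s :=
  Ideal.mem_of_dvd _ (Finset.dvd_prod_of_mem _ (Finset.mem_univ i))
    (coeff_mem_initialCoeffIdeal f h)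

theorem coeff_prod_mem_initialCoeffIdeal (f : ι → PowerSeries A) {s : ι → ℕ} {j : ℕ}
    (hj : j < ∑ i, s i) : PowerSeries.coeff j (∏ i, f i) ∈ initialCoeffIdeal f s := by
  classical
  rw [PowerSeries.coeff_prod]
  refine Ideal.sum_mem _ fun l hl => ?_
  obtain ⟨i, -, hi⟩ := Finset.exists_lt_of_sum_lt ((Finset.mem_finsuppAntidiag.1 hl).1.trans_lt hj)
  exact prod_coeff_mem_initialCoeffIdeal f hi

theorem coeff_prod_sub_prod_coeff_mem_initialCoeffIdeal (f : ι → PowerSeries A) (s : ι → ℕ) :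
    PowerSeries.coeff (∑ i, s i) (∏ i, f i) - ∏ i, PowerSeries.coeff (s i) (f i) ∈
      initialCoeffIdeal f s := by
  classical
  let s' : ι →₀ ℕ := Finsupp.equivFunOnFinite.symm s
  have hs' : s' ∈ Finset.univ.finsuppAntidiag (∑ i, s i) := by
    simp [Finset.mem_finsuppAntidiag, s']
  rw [PowerSeries.coeff_prod]
  change _ - ∏ i, PowerSeries.coeff (s' i) (f i) ∈ _
  rw [← Finset.sum_erase_eq_sub hs']
  refine Ideal.sum_mem _ fun l hl => ?_
  obtain ⟨hne, hl⟩ := Finset.mem_erase.1 hl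
  obtain ⟨i, hi⟩ : ∃ i, l i < s i := by
    by_contra! hle
    have hsum := (Finset.mem_finsuppAntidiag.1 hl).1
    have h := (Finset.sum_eq_sum_iff_of_le fun i _ => hle i).1 hsum.symm
    exact hne (Finsupp.ext fun i => (h i (Finset.mem_univ i)).symm)
  exact prod_coeff_mem_initialCoeffIdeal f hi

theorem isWeaklyRegular_coeff_prod_range' (f : ι → PowerSeries A) (N : ℕ)
    (hreg : ∀ s : ι → ℕ, ∑ i, s i < N → ∀ i,
      IsSMulRegular (M ⧸ (initialCoeffIdeal f s • ⊤ : Submodule A M))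
        (PowerSeries.coeff (s i) (f i)))
    (c : ℕ) (s : ι → ℕ) (hc : ∑ i, s i + c ≤ N) :
    IsWeaklyRegular (M ⧸ (initialCoeffIdeal f s • ⊤ : Submodule A M))
      ((List.range' (∑ i, s i) c).map fun j => PowerSeries.coeff j (∏ i, f i)) := by
  classical
  induction c generalizing s with
  | zero => exact .nil A _
  | succ c ih =>
    rw [List.range'_succ, List.map_cons,
      isWeaklyRegular_cons_congr (coeff_prod_sub_prod_coeff_mem_initialCoeffIdeal f s)]
    refine isWeaklyRegular_prod_cons _ _ fun i _ => ?_
    have hsum : ∑ i', (s + Pi.single i 1 : ι → ℕ) i' = ∑ i', s i' + 1 := by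
      simp [Finset.sum_add_distrib]
    have htail := ih (s + Pi.single i 1) (by omega)
    rw [hsum, initialCoeffIdeal_add_single, Submodule.sup_smul,
      Submodule.ideal_span_singleton_smul] at htail
    exact (isWeaklyRegular_quotient_cons_iff _ _ _).2 ⟨hreg s (by omega) i, htail⟩

theorem isWeaklyRegular_coeff_prod (f : ι → PowerSeries A) (N : ℕ)
    (hreg : ∀ s : ι → ℕ, ∑ i, s i < N → ∀ i,
      IsSMulRegular (M ⧸ (initialCoeffIdeal f s • ⊤ : Submodule A M))
        (PowerSeries.coeff (s i) (f i))) :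
    IsWeaklyRegular M ((List.range N).map fun j => PowerSeries.coeff j (∏ i, f i)) := by
  have h := isWeaklyRegular_coeff_prod_range' (M := M) f N hreg N 0 (by simp)
  have hbot : (initialCoeffIdeal f 0 • ⊤ : Submodule A M) = ⊥ := by
    rw [initialCoeffIdeal_zero, Submodule.bot_smul]
  rw [(Submodule.quotEquivOfEqBot _ hbot).isWeaklyRegular_congr] at h
  simpa [List.range_eq_range'] using h

end CoeffProd

theorem isSMulRegular_X_quotient_span_X_image {σ K : Type*} [CommRing K] {S : Set σ} {v : σ}
    (hv : v ∉ S) :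
    IsSMulRegular (MvPolynomial σ K ⧸ Ideal.span (MvPolynomial.X (R := K) '' S))
      (MvPolynomial.X v : MvPolynomial σ K) := by
  rw [isSMulRegular_quotient_iff_mem_of_smul_mem]
  intro p hp
  rw [smul_eq_mul, MvPolynomial.mem_ideal_span_X_image, MvPolynomial.support_X_mul] at hp
  refine MvPolynomial.mem_ideal_span_X_image.2 fun d hd => ?_
  obtain ⟨w, hw, hdw⟩ := hp _ (Finset.mem_map_of_mem _ hd)
  have hne : v ≠ w := by rintro rfl; exact hv hw
  exact ⟨w, hw, by simpa [hne] using hdw⟩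

section Jets

variable (k : Type*) [Field k] (m n r : ℕ) (hrn : r ≤ n)

/-- The generic `m`-jet `x_i^(0) + x_i^(1) t + ⋯ + x_i^(m) t^m`, as a power series in `t`. -/
noncomputable def genericJet (i : Fin r) : PowerSeries (JetRing k m n) :=
  ((∑ l : Fin (m + 1), Polynomial.C (MvPolynomial.X (Fin.castLE hrn i, l)) *
    Polynomial.X ^ (l : ℕ) : Polynomial (JetRing k m n)) : PowerSeries (JetRing k m n))

theorem coeff_genericJet (i : Fin r) (j : Fin (m + 1)) :
    PowerSeries.coeff j (genericJet k m n r hrn i) = MvPolynomial.X (Fin.castLE hrn i, j) := by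
  simp [genericJet, Polynomial.coeff_C_mul, Polynomial.coeff_X_pow, Fin.val_inj]

theorem coeff_genericJet_of_lt (i : Fin r) {j : ℕ} (hj : m < j) :
    PowerSeries.coeff j (genericJet k m n r hrn i) = 0 := by
  rw [genericJet, Polynomial.coeff_coe, Polynomial.finsetSum_coeff]
  refine Finset.sum_eq_zero fun l _ => ?_
  rw [Polynomial.coeff_C_mul_X_pow, if_neg (by omega)]

theorem jetGen_eq_coeff_prod_genericJet (j : ℕ) :
    jetGen k m n r hrn j = PowerSeries.coeff j (∏ i, genericJet k m n r hrn i) := by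
  simp only [jetGen, genericJet, ← Polynomial.coeToPowerSeries.ringHom_apply, ← map_prod]
  rw [Polynomial.coeToPowerSeries.ringHom_apply, Polynomial.coeff_coe]

theorem initialCoeffIdeal_genericJet (s : Fin r → ℕ) :
    initialCoeffIdeal (genericJet k m n r hrn) s = compPrime k m n r hrn s := by
  refine le_antisymm (Ideal.span_le.2 ?_) (Ideal.span_le.2 ?_)
  · rintro _ ⟨i, j, hj, rfl⟩
    rcases lt_or_ge m j with hmj | hjm
    · rw [coeff_genericJet_of_lt k m n r hrn i hmj]
      exact zero_mem _
    · exact Ideal.subset_span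
        ⟨i, ⟨j, Nat.lt_succ_of_le hjm⟩, hj, coeff_genericJet k m n r hrn i ⟨j, _⟩⟩
  · rintro _ ⟨i, j, hj, rfl⟩
    rw [← coeff_genericJet]
    exact coeff_mem_initialCoeffIdeal _ hj

theorem compPrime_eq_span_X_image (s : Fin r → ℕ) :
    compPrime k m n r hrn s = Ideal.span (MvPolynomial.X ''
      {v | ∃ i, v.1 = Fin.castLE hrn i ∧ (v.2 : ℕ) < s i}) := by
  rw [compPrime]
  congr 1
  ext p
  constructor
  · rintro ⟨i, j, hj, rfl⟩
    exact ⟨_, ⟨i, rfl, hj⟩, rfl⟩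
  · rintro ⟨⟨_, j⟩, ⟨i, rfl, hj⟩, rfl⟩
    exact ⟨i, j, hj, rfl⟩

theorem isSMulRegular_X_quotient_compPrime {s : Fin r → ℕ} {i : Fin r} {j : Fin (m + 1)}
    (h : s i ≤ j) :
    IsSMulRegular (JetRing k m n ⧸ compPrime k m n r hrn s)
      (MvPolynomial.X (Fin.castLE hrn i, j) : JetRing k m n) := by
  rw [compPrime_eq_span_X_image]
  refine isSMulRegular_X_quotient_span_X_image ?_
  rintro ⟨i', hi', hj⟩
  obtain rfl := Fin.castLE_injective hrn hi'
  exact h.not_gt hj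

theorem isWeaklyRegular_jetGen :
    IsWeaklyRegular (JetRing k m n) ((List.range (m + 1)).map (jetGen k m n r hrn)) := by
  rw [funext (jetGen_eq_coeff_prod_genericJet k m n r hrn)]
  refine isWeaklyRegular_coeff_prod (genericJet k m n r hrn) _ fun s hs i => ?_
  have hsi : s i < m + 1 :=
    (Finset.single_le_sum (fun _ _ => Nat.zero_le _) (Finset.mem_univ i)).trans_lt hs
  rw [initialCoeffIdeal_genericJet, smul_eq_mul, Ideal.mul_top,
    coeff_genericJet k m n r hrn i ⟨s i, hsi⟩]
  exact isSMulRegular_X_quotient_compPrime k m n r hrn le_rfl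

theorem jetIdeal_le_compPrime {t : Fin r → ℕ} (ht : m < ∑ i, t i) :
    jetIdeal k m n r hrn ≤ compPrime k m n r hrn t := by
  refine Ideal.span_le.2 ?_
  rintro _ ⟨j, hj, rfl⟩
  rw [jetGen_eq_coeff_prod_genericJet, ← initialCoeffIdeal_genericJet]
  exact coeff_prod_mem_initialCoeffIdeal _ ((Set.mem_Iic.1 hj).trans_lt ht)

theorem jetGens_isRegular_localization_general (P : Ideal (JetRing k m n)) [P.IsPrime]
    (hP : jetIdeal k m n r hrn ≤ P) :
    IsRegular (Localization P.primeCompl)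
      ((List.range (m + 1)).map fun j =>
        algebraMap (JetRing k m n) (Localization P.primeCompl) (jetGen k m n r hrn j)) := by
  have hmem : ∀ g ∈ (List.range (m + 1)).map (jetGen k m n r hrn), g ∈ P := by
    intro g hg
    obtain ⟨j, hj, rfl⟩ := List.mem_map.1 hg
    exact hP (Ideal.subset_span ⟨j, Nat.lt_succ_iff.1 (List.mem_range.1 hj), rfl⟩)
  simpa only [List.map_map, Function.comp_def] using
    (isWeaklyRegular_jetGen k m n r hrn).isRegular_of_isLocalization_of_mem _ P hmem

end Jets

/-- If `t_1, …, t_r` are nonnegative integers with each `t_i ≤ m + 1` and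
`t_1 + ⋯ + t_r = m + 1`, then the images of `g_0, g_1, …, g_m` form a regular sequence
on the localization `R_P` at `P = P(m; t_1, …, t_r)`. -/
theorem jetGens_isRegular_localization
    (k : Type*) [Field k]
    (m n r : ℕ) (hr : 1 ≤ r) (hrn : r ≤ n)
    (t : Fin r → ℕ) (ht : ∀ i, t i ≤ m + 1) (hsum : ∑ i, t i = m + 1)
    [hP : (compPrime k m n r hrn t).IsPrime] :
    RingTheory.Sequence.IsRegular (Localization (compPrime k m n r hrn t).primeCompl)
      ((List.range (m + 1)).map fun j =>
        algebraMap (JetRing k m n) (Localization (compPrime k m n r hrn t).primeCompl)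
          (jetGen k m n r hrn j)) :=
  jetGens_isRegular_localization_general k m n r hrn _ <|
    jetIdeal_le_compPrime k m n r hrn (by omega)
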